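/- (Approximation guarantee of local search, core of Theorem 4.1.) Let $A \in \mathbb{R}^{m \times n}$, let $\lambda_1 \ge \cdots \ge \lambda_m \ge 0$ be the eigenvalues of $AA^T$, let $1 \le k \le m$ with $\sum_{t=k}^m \lambda_t > 0$, let $\epsilon > 0$, and define $\kappa = \lambda_1 \Big/ \left( \frac{1}{m-k+1} \sum_{t=k}^m \lambda_t \right)$. Let $S \subseteq [m]$ with $|S| = k$, $\det(A_S A_S^T) > 0$, and suppose for all $i \in S$, $j \notin S$ that $\det(A_{(S \setminus \{i\}) \cup \{j\}} A_{(S \setminus \{i\}) \cup \{j\}}^T) \le (1 + \epsilon/k) \det(A_S A_S^T)$. Then $\det(A_S A_S^T) \ge \left(1 + \frac{\epsilon}{k}\right)^{-k} \kappa^{-k} \max_{S' \subseteq [m],\, |S'| = k} \det(A_{S'} A_{S'}^T)$. -/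

import Mathlib

open scoped Matrix

/-- `det(A_S A_S^T)`, i.e. the determinant of the principal submatrix `(AA^T)_{S,S}`. -/
noncomputable def subDet {m n : ℕ} (A : Matrix (Fin m) (Fin n) ℝ) (S : Finset (Fin m)) : ℝ :=
  Matrix.det ((A * Aᵀ).submatrix (fun i : {x // x ∈ S} => i.1) (fun j : {x // x ∈ S} => j.1))

/-!
Put `α = 1 + ε / k`, `L = A Aᵀ` and `T = S \ {i}` with `i ∈ S`. By the Schur determinant formula,
the minors `det L_{T ∪ {j}}`, `j ∉ T`, sum to `det L_T` times the trace of the Schur complement of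
`L_T`. With `B = √L` and `Q` the orthogonal projection onto the columns of `B` in `T`, this trace is
`tr ((1 - Q) L)`; as `1 - Q` is a projection of rank `m - k + 1`, Ky Fan's principle bounds it below
by `λ_k + ⋯ + λ_m`. Each of the `m - k + 1` minors is at most `α det L_S` by local optimality, so
`(L_S⁻¹)_{ii} = det L_T / det L_S` is at most `α` divided by the mean of the tail eigenvalues, and
the AM-GM inequality for the eigenvalues of `L_S⁻¹` bounds `det L_S` below. AM-GM for the
eigenvalues of `L_{S'}`, whose diagonal is at most `λ_1`, gives `det L_{S'} ≤ λ_1 ^ k`.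
-/

section PrincipalMinor

variable {ι R : Type*}

/-- The principal submatrix of `L` with rows and columns in `S`. -/
def principalSubmatrix (L : Matrix ι ι R) (S : Finset ι) : Matrix S S R :=
  L.submatrix (↑) (↑)

variable [DecidableEq ι] [CommRing R]

/-- The principal minor of `L` on `S`, the objective of the subset selection problem. -/
def principalMinor (L : Matrix ι ι R) (S : Finset ι) : R :=
  (principalSubmatrix L S).det

/-- The Schur complement of the principal submatrix on `T`, kept as a matrix on the full index
type, where its rows and columns in `T` vanish. -/
noncomputable def schurComplement (L : Matrix ι ι R) (T : Finset ι) : Matrix ι ι R :=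
  L - L.submatrix id ((↑) : T → ι) * (principalSubmatrix L T)⁻¹ * L.submatrix ((↑) : T → ι) id

theorem schurComplement_apply_of_mem_right {L : Matrix ι ι R} {T : Finset ι}
    (hT : IsUnit (principalMinor L T)) (i : ι) {j : ι} (hj : j ∈ T) :
    schurComplement L T i j = 0 := by
  have hcancel : L.submatrix id ((↑) : T → ι) * (principalSubmatrix L T)⁻¹ *
      principalSubmatrix L T = L.submatrix id (↑) :=
    Matrix.nonsing_inv_mul_cancel_right _ _ hT
  exact sub_eq_zero.2 (congrFun (congrFun hcancel i) ⟨j, hj⟩).symm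

theorem principalMinor_insert {L : Matrix ι ι R} {T : Finset ι}
    (hT : IsUnit (principalMinor L T)) {j : ι} (hj : j ∉ T) :
    principalMinor L (insert j T) = principalMinor L T * schurComplement L T j j := by
  let e : ↥(insert j T) ≃ T ⊕ Unit :=
    (Finset.subtypeInsertEquivOption hj).trans (Equiv.optionEquivSumPUnit _)
  have hblocks : (principalSubmatrix L (insert j T)).submatrix e.symm e.symm =
      Matrix.fromBlocks (principalSubmatrix L T) (L.submatrix (↑) fun _ => j)
        (L.submatrix (fun _ => j) (↑)) (L.submatrix (fun _ => j) fun _ => j) := by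
    ext (a | a) (b | b) <;> rfl
  let := Matrix.invertibleOfIsUnitDet _ hT
  rw [principalMinor, ← Matrix.det_submatrix_equiv_self e.symm, hblocks, Matrix.det_fromBlocks₁₁,
    Matrix.invOf_eq_nonsing_inv, Matrix.det_unique (n := Unit)]
  rfl

theorem sum_principalMinor_insert [Fintype ι] {L : Matrix ι ι R} {T : Finset ι}
    (hT : IsUnit (principalMinor L T)) :
    ∑ j ∈ Tᶜ, principalMinor L (insert j T) =
      principalMinor L T * (schurComplement L T).trace := by
  calc ∑ j ∈ Tᶜ, principalMinor L (insert j T)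
      = ∑ j ∈ Tᶜ, principalMinor L T * schurComplement L T j j :=
        Finset.sum_congr rfl fun j hj => principalMinor_insert hT (Finset.mem_compl.1 hj)
    _ = ∑ j, principalMinor L T * schurComplement L T j j :=
        Finset.sum_subset (Finset.subset_univ _) fun j _ hj => by
          rw [schurComplement_apply_of_mem_right hT j (by simpa using hj), mul_zero]
    _ = principalMinor L T * (schurComplement L T).trace := (Finset.mul_sum ..).symm

theorem adjugate_apply_self [Fintype ι] (M : Matrix ι ι R) (i : ι) :
    M.adjugate i i = (M.submatrix ((↑) : {j // j ≠ i} → ι) (↑)).det := by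
  let e : {j // j ≠ i} ⊕ Unit ≃ ι :=
    (Equiv.optionEquivSumPUnit _).symm.trans (Equiv.optionSubtypeNe i)
  have hblocks : (M.updateRow i (Pi.single i 1)).submatrix e e =
      Matrix.fromBlocks (M.submatrix (↑) (↑)) (M.submatrix (↑) fun _ => i) 0 1 := by
    ext (a | a) (b | b)
    · exact congrFun (Matrix.updateRow_ne a.2) _
    · exact congrFun (Matrix.updateRow_ne a.2) _
    · simp [e, b.2]
    · simp [e]
  rw [Matrix.adjugate_apply, ← Matrix.det_submatrix_equiv_self e, hblocks,
    Matrix.det_fromBlocks_zero₂₁, Matrix.det_one, mul_one]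

theorem det_submatrix_ne_principalSubmatrix (L : Matrix ι ι R) (S : Finset ι) (i : S) :
    ((principalSubmatrix L S).submatrix ((↑) : {j // j ≠ i} → S) (↑)).det =
      principalMinor L (S.erase i) := by
  let e : ↥(S.erase i) ≃ {j : S // j ≠ i} :=
    { toFun j := ⟨⟨j, Finset.mem_of_mem_erase j.2⟩,
        fun h => Finset.ne_of_mem_erase j.2 (congrArg Subtype.val h)⟩
      invFun j := ⟨j.1, Finset.mem_erase.2 ⟨fun h => j.2 (Subtype.ext h), j.1.2⟩⟩ }
  exact (Matrix.det_submatrix_equiv_self e _).symm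

end PrincipalMinor

section ColumnProjection

variable {ι κ R : Type*} [Fintype ι] [Fintype κ] [DecidableEq κ] [CommRing R] [StarRing R]

/-- The orthogonal projection onto the column space of a matrix `C` with independent columns. -/
noncomputable def columnProjection (C : Matrix ι κ R) : Matrix ι ι R :=
  C * (Cᴴ * C)⁻¹ * Cᴴ

theorem isStarProjection_columnProjection {C : Matrix ι κ R} (hC : IsUnit (Cᴴ * C).det) :
    IsStarProjection (columnProjection C) where
  isIdempotentElem := by
    calc C * (Cᴴ * C)⁻¹ * Cᴴ * (C * (Cᴴ * C)⁻¹ * Cᴴ)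
        = C * (Cᴴ * C)⁻¹ * (Cᴴ * C) * (Cᴴ * C)⁻¹ * Cᴴ := by simp only [Matrix.mul_assoc]
      _ = C * (Cᴴ * C)⁻¹ * Cᴴ := by rw [Matrix.nonsing_inv_mul_cancel_right _ _ hC]
  isSelfAdjoint := Matrix.isHermitian_mul_mul_conjTranspose C
    (Matrix.isHermitian_conjTranspose_mul_self C).inv

theorem trace_columnProjection {C : Matrix ι κ R} (hC : IsUnit (Cᴴ * C).det) :
    (columnProjection C).trace = Fintype.card κ := by
  rw [columnProjection, Matrix.trace_mul_comm, ← Matrix.mul_assoc, Matrix.mul_nonsing_inv _ hC,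
    Matrix.trace_one]

theorem schurComplement_conjTranspose_mul_self [DecidableEq ι] {ν : Type*} [DecidableEq ν]
    (B : Matrix ι ν R) (T : Finset ν) :
    schurComplement (Bᴴ * B) T =
      Bᴴ * (1 - columnProjection (B.submatrix id ((↑) : T → ν))) * B := by
  set C := B.submatrix id ((↑) : T → ν)
  change Bᴴ * B - Bᴴ * C * (Cᴴ * C)⁻¹ * (Cᴴ * B) = Bᴴ * (1 - C * (Cᴴ * C)⁻¹ * Cᴴ) * B
  simp only [Matrix.mul_sub, Matrix.sub_mul, Matrix.mul_one, Matrix.mul_assoc]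

end ColumnProjection

theorem sum_le_sum_mul_of_threshold {ι : Type*} [Fintype ι] {s : Finset ι} {f w : ι → ℝ} {c : ℝ}
    (hle : ∀ t ∈ s, f t ≤ c) (hge : ∀ t ∉ s, c ≤ f t) (hw0 : ∀ t, 0 ≤ w t) (hw1 : ∀ t, w t ≤ 1)
    (hw : ∑ t, w t = s.card) : ∑ t ∈ s, f t ≤ ∑ t, w t * f t := by
  classical
  have hterm (t : ι) : (if t ∈ s then f t - c else 0) ≤ w t * (f t - c) := by
    split_ifs with ht
    · nlinarith [hle t ht, hw1 t]
    · exact mul_nonneg (hw0 t) (sub_nonneg.2 (hge t ht))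
  have hsum := Finset.sum_le_sum fun t (_ : t ∈ Finset.univ) => hterm t
  simp only [Finset.sum_ite_mem, Finset.univ_inter, mul_sub, Finset.sum_sub_distrib,
    ← Finset.sum_mul, hw, Finset.sum_const, nsmul_eq_mul] at hsum
  linarith

section Spectral

open scoped ComplexOrder MatrixOrder

variable {ι 𝕜 : Type*} [Fintype ι] [DecidableEq ι] [RCLike 𝕜] {L P : Matrix ι ι 𝕜}

/-- The diagonal entries of `P` in an orthonormal eigenbasis of `L`: the weights with which the
eigenvalues of `L` enter `tr (P L)`. -/
noncomputable def spectralWeight (hL : L.IsHermitian) (P : Matrix ι ι 𝕜) (t : ι) : ℝ :=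
  RCLike.re ((star (hL.eigenvectorUnitary : Matrix ι ι 𝕜) * P * hL.eigenvectorUnitary) t t)

theorem spectralWeight_nonneg (hL : L.IsHermitian) (hP : 0 ≤ P) (t : ι) :
    0 ≤ spectralWeight hL P t :=
  (RCLike.nonneg_iff.1 ((Matrix.nonneg_iff_posSemidef.1 hP).conjTranspose_mul_mul_same
    (hL.eigenvectorUnitary : Matrix ι ι 𝕜)).diag_nonneg).1

theorem spectralWeight_le_one (hL : L.IsHermitian) (hP : P ≤ 1) (t : ι) :
    spectralWeight hL P t ≤ 1 := by
  have h := spectralWeight_nonneg hL (sub_nonneg.2 hP) t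
  simpa [spectralWeight, Matrix.mul_sub, Matrix.sub_mul] using h

theorem sum_spectralWeight (hL : L.IsHermitian) (P : Matrix ι ι 𝕜) :
    ∑ t, spectralWeight hL P t = RCLike.re P.trace := by
  simp only [spectralWeight, ← map_sum]
  change RCLike.re (Matrix.trace _) = _
  rw [Matrix.trace_mul_cycle, Unitary.mul_star_self_of_mem hL.eigenvectorUnitary.2,
    Matrix.one_mul]

theorem re_trace_mul_eq_sum_spectralWeight (hL : L.IsHermitian) (P : Matrix ι ι 𝕜) :
    RCLike.re (P * L).trace = ∑ t, spectralWeight hL P t * hL.eigenvalues t := by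
  have htrace : (P * L).trace = (star (hL.eigenvectorUnitary : Matrix ι ι 𝕜) * P *
      (hL.eigenvectorUnitary : Matrix ι ι 𝕜) *
        Matrix.diagonal (RCLike.ofReal ∘ hL.eigenvalues)).trace := by
    conv_lhs => rw [hL.spectral_theorem, Unitary.conjStarAlgAut_apply]
    rw [← Matrix.mul_assoc, Matrix.trace_mul_comm]
    simp only [Matrix.mul_assoc]
  rw [htrace]
  simp [Matrix.trace, Matrix.mul_diagonal, spectralWeight]

/-- **Ky Fan's minimum principle**; `s` collects `tr P` smallest eigenvalues. -/
theorem sum_eigenvalues_le_re_trace_mul (hL : L.IsHermitian) (hP0 : 0 ≤ P) (hP1 : P ≤ 1)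
    {s : Finset ι} {c : ℝ} (hle : ∀ t ∈ s, hL.eigenvalues t ≤ c)
    (hge : ∀ t ∉ s, c ≤ hL.eigenvalues t) (htr : RCLike.re P.trace = s.card) :
    ∑ t ∈ s, hL.eigenvalues t ≤ RCLike.re (P * L).trace := by
  rw [re_trace_mul_eq_sum_spectralWeight hL]
  exact sum_le_sum_mul_of_threshold hle hge (spectralWeight_nonneg hL hP0)
    (spectralWeight_le_one hL hP1) ((sum_spectralWeight hL P).trans htr)

theorem re_apply_self_le_of_eigenvalues_le (hL : L.IsHermitian) {b : ℝ}
    (hb : ∀ t, hL.eigenvalues t ≤ b) (i : ι) : RCLike.re (L i i) ≤ b := by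
  have hE : IsStarProjection (Matrix.diagonal (Pi.single i (1 : 𝕜))) :=
    ⟨by simp [IsIdempotentElem, Pi.single_apply], by
      simp [IsSelfAdjoint, Matrix.star_eq_conjTranspose, Matrix.diagonal_conjTranspose]⟩
  have htrace : (Matrix.diagonal (Pi.single i (1 : 𝕜)) * L).trace = L i i := by
    simp [Matrix.trace, Matrix.diagonal_mul, Pi.single_apply]
  calc RCLike.re (L i i)
      = ∑ t, spectralWeight hL (Matrix.diagonal (Pi.single i 1)) t * hL.eigenvalues t := by
        rw [← re_trace_mul_eq_sum_spectralWeight, htrace]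
    _ ≤ ∑ t, spectralWeight hL (Matrix.diagonal (Pi.single i 1)) t * b :=
        Finset.sum_le_sum fun t _ =>
          mul_le_mul_of_nonneg_left (hb t) (spectralWeight_nonneg hL hE.nonneg t)
    _ = b := by rw [← Finset.sum_mul, sum_spectralWeight]; simp

end Spectral

section Determinant

open scoped ComplexOrder

variable {ι 𝕜 : Type*} [Fintype ι] [DecidableEq ι] [RCLike 𝕜] {M : Matrix ι ι 𝕜}

theorem re_det_eq_prod_eigenvalues (hM : M.IsHermitian) :
    RCLike.re M.det = ∏ i, hM.eigenvalues i := by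
  rw [hM.det_eq_prod_eigenvalues, ← RCLike.ofReal_prod, RCLike.ofReal_re]

theorem ofReal_re_det (hM : M.IsHermitian) : (RCLike.re M.det : 𝕜) = M.det := by
  rw [re_det_eq_prod_eigenvalues hM, RCLike.ofReal_prod, hM.det_eq_prod_eigenvalues]

theorem re_det_le_pow_of_diag_le (hM : M.PosSemidef) {c : ℝ} (hc : ∀ i, RCLike.re (M i i) ≤ c) :
    RCLike.re M.det ≤ c ^ Fintype.card ι := by
  rcases isEmpty_or_nonempty ι with h | h
  · simp
  have hcard : (0 : ℝ) < Fintype.card ι := by exact_mod_cast Fintype.card_pos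
  have htrace : ∑ i, hM.1.eigenvalues i ≤ c * Fintype.card ι := by
    calc ∑ i, hM.1.eigenvalues i = ∑ i, RCLike.re (M i i) := by
          rw [← map_sum, ← RCLike.ofReal_re (K := 𝕜) (∑ i, hM.1.eigenvalues i),
            RCLike.ofReal_sum, ← hM.1.trace_eq_sum_eigenvalues]
          rfl
      _ ≤ c * Fintype.card ι := by
          simpa [mul_comm] using Finset.sum_le_sum fun i (_ : i ∈ Finset.univ) => hc i
  have hdet_nonneg : 0 ≤ RCLike.re M.det := (RCLike.nonneg_iff.1 hM.det_nonneg).1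
  have hgeom : RCLike.re M.det ^ (Fintype.card ι : ℝ)⁻¹ ≤ c := by
    have hamgm := Real.geom_mean_le_arith_mean Finset.univ (fun _ => 1) hM.1.eigenvalues
      (fun _ _ => zero_le_one) (by simpa using hcard) fun i _ => hM.eigenvalues_nonneg i
    simp only [Real.rpow_one, one_mul, Finset.sum_const, Finset.card_univ, nsmul_eq_mul, mul_one,
      ← re_det_eq_prod_eigenvalues hM.1] at hamgm
    exact hamgm.trans ((div_le_iff₀ hcard).2 htrace)
  calc RCLike.re M.det = (RCLike.re M.det ^ (Fintype.card ι : ℝ)⁻¹) ^ Fintype.card ι :=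
        (Real.rpow_inv_natCast_pow hdet_nonneg Fintype.card_ne_zero).symm
    _ ≤ c ^ Fintype.card ι := by gcongr

theorem re_inv_apply_self (hM : M.IsHermitian) (i : ι) :
    RCLike.re (M⁻¹ i i) =
      RCLike.re (M.submatrix ((↑) : {j // j ≠ i} → ι) (↑)).det / RCLike.re M.det := by
  rw [Matrix.inv_def, Matrix.smul_apply, adjugate_apply_self, Ring.inverse_eq_inv', smul_eq_mul,
    ← ofReal_re_det hM, ← RCLike.ofReal_inv, RCLike.re_ofReal_mul, RCLike.ofReal_re, div_eq_inv_mul]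

/-- The hypothesis bounds the diagonal of `M⁻¹` by `c⁻¹`, so that `re_det_le_pow_of_diag_le` bounds
`det M⁻¹`. -/
theorem pow_card_le_re_det (hM : M.PosDef) {c : ℝ} (hc : 0 < c)
    (h : ∀ i : ι, c * RCLike.re (M.submatrix ((↑) : {j // j ≠ i} → ι) (↑)).det ≤ RCLike.re M.det) :
    c ^ Fintype.card ι ≤ RCLike.re M.det := by
  have hpos : 0 < RCLike.re M.det := (RCLike.pos_iff.1 hM.det_pos).1
  have hdiag (i : ι) : RCLike.re (M⁻¹ i i) ≤ c⁻¹ := by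
    rw [re_inv_apply_self hM.1, div_le_iff₀ hpos, le_inv_mul_iff₀ hc]
    exact h i
  have hinv := re_det_le_pow_of_diag_le hM.inv.posSemidef hdiag
  rw [Matrix.det_nonsing_inv, Ring.inverse_eq_inv', ← ofReal_re_det hM.1, ← RCLike.ofReal_inv,
    RCLike.ofReal_re, inv_pow] at hinv
  exact (inv_le_inv₀ hpos (pow_pos hc _)).1 hinv

end Determinant

section LocalSearch

open scoped ComplexOrder MatrixOrder

variable {ι 𝕜 : Type*} [DecidableEq ι] [RCLike 𝕜] {L : Matrix ι ι 𝕜}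

theorem posDef_principalSubmatrix (hL : L.PosSemidef) {S : Finset ι}
    (hS : 0 < RCLike.re (principalMinor L S)) : (principalSubmatrix L S).PosDef :=
  (hL.submatrix _).posDef_iff_det_ne_zero.2 fun h =>
    hS.ne' (by simp [principalMinor, principalSubmatrix, h])

theorem re_principalMinor_pos_of_subset (hL : L.PosSemidef) {S T : Finset ι}
    (hS : 0 < RCLike.re (principalMinor L S)) (hTS : T ⊆ S) :
    0 < RCLike.re (principalMinor L T) :=
  (RCLike.pos_iff.1 ((posDef_principalSubmatrix hL hS).submatrix
    (Set.inclusion_injective hTS)).det_pos).1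

variable [Fintype ι]

theorem sum_eigenvalues_le_re_trace_schurComplement (hL : L.PosSemidef) {T s : Finset ι}
    (hT : IsUnit (principalMinor L T)) {c : ℝ} (hle : ∀ t ∈ s, hL.1.eigenvalues t ≤ c)
    (hge : ∀ t ∉ s, c ≤ hL.1.eigenvalues t) (hcard : s.card + T.card = Fintype.card ι) :
    ∑ t ∈ s, hL.1.eigenvalues t ≤ RCLike.re (schurComplement L T).trace := by
  set B := CFC.sqrt L
  have hB : Bᴴ = B := (CFC.sqrt_nonneg L).isSelfAdjoint
  have hBB : B * B = L := CFC.sqrt_mul_sqrt_self L (Matrix.nonneg_iff_posSemidef.2 hL)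
  set C := B.submatrix id ((↑) : T → ι)
  have hC : IsUnit (Cᴴ * C).det := by
    have hgram : Cᴴ * C = principalSubmatrix (Bᴴ * B) T := rfl
    rwa [hgram, hB, hBB]
  have hproj := (isStarProjection_columnProjection hC).one_sub
  have htrace : (schurComplement L T).trace = ((1 - columnProjection C) * L).trace := by
    conv_lhs => rw [← hBB]
    nth_rewrite 1 [← hB]
    rw [schurComplement_conjTranspose_mul_self, hB, Matrix.trace_mul_comm, ← Matrix.mul_assoc, hBB,
      Matrix.trace_mul_comm]
  rw [htrace]
  refine sum_eigenvalues_le_re_trace_mul hL.1 hproj.nonneg hproj.le_one hle hge ?_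
  simp [Matrix.trace_sub, trace_columnProjection hC, ← hcard]

theorem sum_eigenvalues_mul_le_sum_principalMinor_insert (hL : L.PosSemidef) {T s : Finset ι}
    (hT : 0 < RCLike.re (principalMinor L T)) {c : ℝ} (hle : ∀ t ∈ s, hL.1.eigenvalues t ≤ c)
    (hge : ∀ t ∉ s, c ≤ hL.1.eigenvalues t) (hcard : s.card + T.card = Fintype.card ι) :
    (∑ t ∈ s, hL.1.eigenvalues t) * RCLike.re (principalMinor L T) ≤
      ∑ j ∈ Tᶜ, RCLike.re (principalMinor L (insert j T)) := by
  have hunit : IsUnit (principalMinor L T) :=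
    isUnit_iff_ne_zero.2 fun h => hT.ne' (by simp [h])
  have hreal : (RCLike.re (principalMinor L T) : 𝕜) = principalMinor L T :=
    ofReal_re_det (hL.submatrix _).1
  rw [← map_sum, sum_principalMinor_insert hunit, ← hreal, RCLike.re_ofReal_mul, RCLike.ofReal_re,
    mul_comm]
  exact mul_le_mul_of_nonneg_left
    (sum_eigenvalues_le_re_trace_schurComplement hL hunit hle hge hcard) hT.le

theorem re_principalMinor_le_pow (hL : L.PosSemidef) {b : ℝ} (hb : ∀ t, hL.1.eigenvalues t ≤ b)
    (S : Finset ι) : RCLike.re (principalMinor L S) ≤ b ^ S.card := by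
  simpa [principalMinor, principalSubmatrix] using
    re_det_le_pow_of_diag_le (hL.submatrix ((↑) : S → ι))
      fun i => re_apply_self_le_of_eigenvalues_le hL.1 hb i

theorem sum_eigenvalues_mul_principalMinor_erase_le (hL : L.PosSemidef) {S s : Finset ι}
    (hS : 0 < RCLike.re (principalMinor L S)) {c : ℝ} (hle : ∀ t ∈ s, hL.1.eigenvalues t ≤ c)
    (hge : ∀ t ∉ s, c ≤ hL.1.eigenvalues t) (hcard : s.card + S.card = Fintype.card ι + 1)
    {α : ℝ} (hα : 1 ≤ α) {i : ι} (hi : i ∈ S)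
    (hloc : ∀ j ∉ S, RCLike.re (principalMinor L (insert j (S.erase i))) ≤
      α * RCLike.re (principalMinor L S)) :
    (∑ t ∈ s, hL.1.eigenvalues t) * RCLike.re (principalMinor L (S.erase i)) ≤
      s.card * (α * RCLike.re (principalMinor L S)) := by
  have hcardT : s.card + (S.erase i).card = Fintype.card ι := by
    have := Finset.card_erase_add_one hi
    omega
  have hcompl : (S.erase i)ᶜ.card = s.card := by
    rw [Finset.card_compl]
    omega
  have hinsert : ∀ j ∈ (S.erase i)ᶜ, RCLike.re (principalMinor L (insert j (S.erase i))) ≤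
      α * RCLike.re (principalMinor L S) := by
    intro j hj
    by_cases hjS : j ∈ S
    · obtain rfl : j = i := by simpa [hjS] using hj
      rw [Finset.insert_erase hi]
      exact le_mul_of_one_le_left hS.le hα
    · exact hloc j hjS
  calc (∑ t ∈ s, hL.1.eigenvalues t) * RCLike.re (principalMinor L (S.erase i))
      ≤ ∑ j ∈ (S.erase i)ᶜ, RCLike.re (principalMinor L (insert j (S.erase i))) :=
        sum_eigenvalues_mul_le_sum_principalMinor_insert hL
          (re_principalMinor_pos_of_subset hL hS (Finset.erase_subset i S)) hle hge hcardT
    _ ≤ s.card * (α * RCLike.re (principalMinor L S)) := by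
        rw [← hcompl, ← nsmul_eq_mul]
        exact Finset.sum_le_card_nsmul _ _ _ hinsert

theorem pow_le_re_principalMinor_of_swap_le (hL : L.PosSemidef) {S s : Finset ι}
    (hS : 0 < RCLike.re (principalMinor L S)) {c : ℝ} (hle : ∀ t ∈ s, hL.1.eigenvalues t ≤ c)
    (hge : ∀ t ∉ s, c ≤ hL.1.eigenvalues t) (hcard : s.card + S.card = Fintype.card ι + 1)
    (hsum : 0 < ∑ t ∈ s, hL.1.eigenvalues t) {α : ℝ} (hα : 1 ≤ α)
    (hloc : ∀ i ∈ S, ∀ j ∉ S, RCLike.re (principalMinor L (insert j (S.erase i))) ≤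
      α * RCLike.re (principalMinor L S)) :
    ((∑ t ∈ s, hL.1.eigenvalues t) / s.card / α) ^ S.card ≤ RCLike.re (principalMinor L S) := by
  have hs : 0 < (s.card : ℝ) := by
    have := S.card_le_univ
    exact_mod_cast (by omega : 0 < s.card)
  have : 0 < α := one_pos.trans_le hα
  rw [← Fintype.card_coe S]
  refine pow_card_le_re_det (posDef_principalSubmatrix hL hS) (by positivity) fun i => ?_
  rw [det_submatrix_ne_principalSubmatrix, div_div, div_mul_eq_mul_div, div_le_iff₀ (by positivity)]
  have herase := sum_eigenvalues_mul_principalMinor_erase_le hL hS hle hge hcard hα i.2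
    (hloc i i.2)
  change _ ≤ RCLike.re (principalMinor L S) * _
  linarith

theorem card_filter_le_add_one {m k : ℕ} (hk1 : 1 ≤ k) (hk2 : k ≤ m) :
    (Finset.univ.filter fun t : Fin m => k ≤ (t : ℕ) + 1).card = m - k + 1 := by
  have hIci : (Finset.univ.filter fun t : Fin m => k ≤ (t : ℕ) + 1) =
      Finset.Ici ⟨k - 1, by omega⟩ := by
    ext t
    simp [Fin.le_def]
  rw [hIci, Fin.card_Ici, Fin.val_mk]
  omega

theorem tail_average_div_pow_le_re_principalMinor (hL : L.PosSemidef) {m : ℕ} {lam : Fin m → ℝ}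
    (hmono : Antitone lam) (σ : Fin m ≃ ι) (hlam : ∀ t, lam t = hL.1.eigenvalues (σ t))
    {k : ℕ} (hk1 : 1 ≤ k) (hk2 : k ≤ m)
    (hsum : 0 < ∑ t ∈ Finset.univ.filter (fun t : Fin m => k ≤ (t : ℕ) + 1), lam t)
    {α : ℝ} (hα : 1 ≤ α)
    {S : Finset ι} (hS : S.card = k) (hpos : 0 < RCLike.re (principalMinor L S))
    (hloc : ∀ i ∈ S, ∀ j ∉ S, RCLike.re (principalMinor L (insert j (S.erase i))) ≤
      α * RCLike.re (principalMinor L S)) :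
    ((∑ t ∈ Finset.univ.filter (fun t : Fin m => k ≤ (t : ℕ) + 1), lam t)
      / ((m - k + 1 : ℕ) : ℝ) / α) ^ k ≤ RCLike.re (principalMinor L S) := by
  let s := (Finset.univ.filter fun t : Fin m => k ≤ (t : ℕ) + 1).map σ.toEmbedding
  have hs : s.card = m - k + 1 := by rw [Finset.card_map, card_filter_le_add_one hk1 hk2]
  have htail : ∑ t ∈ s, hL.1.eigenvalues t =
      ∑ t ∈ Finset.univ.filter (fun t : Fin m => k ≤ (t : ℕ) + 1), lam t := by
    rw [Finset.sum_map]
    exact Finset.sum_congr rfl fun t _ => (hlam t).symm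
  have hmem (t : ι) : t ∈ s ↔ k ≤ (σ.symm t : ℕ) + 1 := by simp [s]
  have heig (t : ι) : hL.1.eigenvalues t = lam (σ.symm t) := by
    rw [hlam, σ.apply_symm_apply]
  have hle : ∀ t ∈ s, hL.1.eigenvalues t ≤ lam ⟨k - 1, by omega⟩ := fun t ht => by
    rw [hmem] at ht
    exact (heig t).trans_le (hmono (Fin.le_def.2 (Nat.sub_le_iff_le_add.2 ht)))
  have hge : ∀ t ∉ s, lam ⟨k - 1, by omega⟩ ≤ hL.1.eigenvalues t := fun t ht => by
    rw [hmem] at ht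
    exact (hmono (Fin.le_def.2 (Nat.le_sub_one_of_lt (by omega)))).trans_eq (heig t).symm
  have hcard : s.card + S.card = Fintype.card ι + 1 := by
    rw [hs, hS, ← Fintype.card_congr σ, Fintype.card_fin]
    omega
  rw [← hs, ← htail, ← hS]
  exact pow_le_re_principalMinor_of_swap_le hL hpos hle hge hcard (htail ▸ hsum) hα hloc

theorem statement15_general (hL : L.PosSemidef) {m : ℕ} {lam : Fin m → ℝ} (hmono : Antitone lam)
    (σ : Fin m ≃ ι) (hlam : ∀ t, lam t = hL.1.eigenvalues (σ t))
    {k : ℕ} (hk1 : 1 ≤ k) (hk2 : k ≤ m)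
    (hsum : 0 < ∑ t ∈ Finset.univ.filter (fun t : Fin m => k ≤ (t : ℕ) + 1), lam t)
    {α : ℝ} (hα : 1 ≤ α)
    {S : Finset ι} (hS : S.card = k) (hpos : 0 < RCLike.re (principalMinor L S))
    (hloc : ∀ i ∈ S, ∀ j ∉ S, RCLike.re (principalMinor L (insert j (S.erase i))) ≤
      α * RCLike.re (principalMinor L S))
    {S' : Finset ι} (hS' : S'.card = k) :
    (α ^ k)⁻¹ *
        ((lam ⟨0, lt_of_lt_of_le hk1 hk2⟩
            / ((∑ t ∈ Finset.univ.filter (fun t : Fin m => k ≤ (t : ℕ) + 1), lam t)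
                / ((m - k + 1 : ℕ) : ℝ))) ^ k)⁻¹ *
        RCLike.re (principalMinor L S')
      ≤ RCLike.re (principalMinor L S) := by
  set tail := ∑ t ∈ Finset.univ.filter (fun t : Fin m => k ≤ (t : ℕ) + 1), lam t
  set top := lam ⟨0, lt_of_lt_of_le hk1 hk2⟩
  have hle_top (t : Fin m) : lam t ≤ top := hmono (Fin.le_def.2 (Nat.zero_le _))
  have htop : 0 < top := by
    by_contra! h
    exact hsum.not_ge (Finset.sum_nonpos fun t _ => (hle_top t).trans h)
  have hupper : RCLike.re (principalMinor L S') ≤ top ^ k := by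
    rw [← hS']
    refine re_principalMinor_le_pow hL (fun t => ?_) S'
    rw [← σ.apply_symm_apply t, ← hlam]
    exact hle_top _
  calc (α ^ k)⁻¹ * ((top / (tail / (m - k + 1 : ℕ))) ^ k)⁻¹ * RCLike.re (principalMinor L S')
      ≤ (α ^ k)⁻¹ * ((top / (tail / (m - k + 1 : ℕ))) ^ k)⁻¹ * top ^ k := by gcongr
    _ = (tail / (m - k + 1 : ℕ) / α) ^ k := by
        rw [← inv_pow, ← inv_pow, ← mul_pow, ← mul_pow]
        congr 1
        field_simp
    _ ≤ RCLike.re (principalMinor L S) :=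
        tail_average_div_pow_le_re_principalMinor hL hmono σ hlam hk1 hk2 hsum hα hS hpos hloc

end LocalSearch

/-- approximation guarantee of local search: let `λ₁ ≥ ⋯ ≥ λ_m ≥ 0` be the
eigenvalues of `AA^T` (here `lam`, an antitone enumeration of the eigenvalues, so the largest
eigenvalue `λ₁` is `lam 0`), `1 ≤ k ≤ m` with `∑_{t=k}^m λ_t > 0`, `ε > 0`, and
`κ = λ₁ / ((1/(m-k+1)) ∑_{t=k}^m λ_t)`. If `S` has `|S| = k`, `det(A_S A_S^T) > 0`, and every
single-element swap improves the determinant by at most a `(1 + ε/k)` factor, then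
`det(A_S A_S^T) ≥ (1 + ε/k)⁻ᵏ κ⁻ᵏ max_{|S'| = k} det(A_{S'} A_{S'}^T)`
(stated for every `S'` with `|S'| = k`, equivalently for the maximum over such `S'`). -/
theorem statement15 {m n : ℕ} (A : Matrix (Fin m) (Fin n) ℝ)
    (hH : (A * Aᵀ).IsHermitian)
    (lam : Fin m → ℝ) (hmono : Antitone lam) (hnn : ∀ t, 0 ≤ lam t)
    (hperm : ∃ σ : Equiv.Perm (Fin m), ∀ t, lam t = hH.eigenvalues (σ t))
    (k : ℕ) (hk1 : 1 ≤ k) (hk2 : k ≤ m)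
    (hsum : 0 < ∑ t ∈ Finset.univ.filter (fun t : Fin m => k ≤ (t : ℕ) + 1), lam t)
    (ε : ℝ) (hε : 0 < ε)
    (S : Finset (Fin m)) (hS : S.card = k) (hpos : 0 < subDet A S)
    (hloc : ∀ i ∈ S, ∀ j ∉ S,
      subDet A (insert j (S.erase i)) ≤ (1 + ε / k) * subDet A S) :
    ∀ S' : Finset (Fin m), S'.card = k →
      ((1 + ε / k) ^ k)⁻¹ *
          ((lam ⟨0, lt_of_lt_of_le hk1 hk2⟩
              / ((∑ t ∈ Finset.univ.filter (fun t : Fin m => k ≤ (t : ℕ) + 1), lam t)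
                  / ((m - k + 1 : ℕ) : ℝ))) ^ k)⁻¹ *
          subDet A S'
        ≤ subDet A S := by
  obtain ⟨σ, hσ⟩ := hperm
  have hA : (A * Aᵀ).PosSemidef := Matrix.posSemidef_self_mul_conjTranspose A
  exact fun S' hS' => statement15_general hA hmono σ hσ hk1 hk2 hsum
    (le_add_of_nonneg_right (by positivity)) hS hpos hloc hS'
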